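/- arXiv:2312.00650 — 3 statements merged into one kernel-verified Lean document; each statement's English description precedes it below -/
import Mathlib

section
/- Let α : R → D be an option preserving map from a rulegraph R to a digraph D. Then the subdigraph of D induced by the image α(V(R)) is a rulegraph, i.e., it contains no infinite directed walk. Moreover, if R is a gamegraph with starting position s, then the induced subdigraph on α(V(R)) is a gamegraph with starting position α(s). -/
/-- The set of options (out-neighbors) of a vertex `p` in the digraph with arrow
relation `E`. -/
def OptSet {V : Type*} (E : V → V → Prop) (p : V) : Set V := {q | E p q}

/-- A digraph has no infinite directed walk (i.e. it is a rulegraph). -/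
def NoInfiniteWalk {V : Type*} (E : V → V → Prop) : Prop :=
  ¬ ∃ f : ℕ → V, ∀ n, E (f n) (f (n + 1))

/-- A map `α` between digraphs is option preserving if `Opt (α p) = α '' Opt p`
for every vertex `p`. -/
def OptionPreserving {V W : Type*} (E : V → V → Prop) (F : W → W → Prop)
    (α : V → W) : Prop :=
  ∀ p, OptSet F (α p) = α '' OptSet E p

/-- A source is a vertex with no in-neighbors. -/
def IsSource {V : Type*} (E : V → V → Prop) (s : V) : Prop := ∀ q, ¬ E q s

/-- A gamegraph is a rulegraph with a unique source `s` (the starting position)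
such that every vertex is a subposition of `s`. -/
def IsGamegraph {V : Type*} (E : V → V → Prop) (s : V) : Prop :=
  NoInfiniteWalk E ∧ IsSource E s ∧ (∀ t, IsSource E t → t = s) ∧
    ∀ p, Relation.ReflTransGen E s p

/-- The equivalence class of `p` under the relation `r`. -/
def cls {V : Type*} (r : V → V → Prop) (p : V) : Set V := {x | r p x}

/-- A congruence relation on a rulegraph: an equivalence relation such that
related vertices have the same set of classes of options. -/
def IsCongruence {V : Type*} (E : V → V → Prop) (r : V → V → Prop) : Prop :=
  Equivalence r ∧ ∀ p q, r p q → cls r '' OptSet E p = cls r '' OptSet E q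

/-- A rulegraph is simple if its only congruence relation is equality. -/
def IsSimple {V : Type*} (E : V → V → Prop) : Prop :=
  ∀ r : V → V → Prop, IsCongruence E r → ∀ p q, r p q → p = q

/-- The arrow relation of the quotient digraph by a setoid `s`: there is an arrow
from `[p]` to `[q]` exactly when there are `p' ∼ p` and `q' ∼ q` with `q' ∈ Opt p'`. -/
def QuotE {V : Type*} (E : V → V → Prop) (s : Setoid V) :
    Quotient s → Quotient s → Prop :=
  fun a b => ∃ p q : V, Quotient.mk s p = a ∧ Quotient.mk s q = b ∧ E p q

/-! An option preserving map is an arrow homomorphism along which arrows lift: every arrow out of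
`α p` is the image of an arrow out of `p`. Lifting transfers well-foundedness from `R` to the image,
so the image has no infinite walk; the homomorphism property carries walks from `s` to walks from
`α s`. In a rulegraph, a vertex from which every vertex is reachable is automatically the unique
source: an arrow into it would close a directed cycle, and every other vertex is the end of a
nontrivial walk. -/

section

variable {V W : Type*} {E : V → V → Prop} {F : W → W → Prop} {α : V → W}

theorem optionPreserving_iff :
    OptionPreserving E F α ↔
      (∀ p q, E p q → F (α p) (α q)) ∧ Relation.Fibration (flip E) (flip F) α := by
  simp only [OptionPreserving, Set.Subset.antisymm_iff, forall_and, Set.image_subset_iff]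
  exact and_comm

theorem OptionPreserving.map_rel (hα : OptionPreserving E F α) {p q : V} (hpq : E p q) :
    F (α p) (α q) :=
  (optionPreserving_iff.1 hα).1 p q hpq

theorem OptionPreserving.fibration_flip (hα : OptionPreserving E F α) :
    Relation.Fibration (flip E) (flip F) α :=
  (optionPreserving_iff.1 hα).2

theorem OptionPreserving.codRestrict (hα : OptionPreserving E F α) {S : Set W}
    (hS : ∀ p, α p ∈ S) :
    OptionPreserving E (fun a b : S => F a.1 b.1) (S.codRestrict α hS) := by
  refine optionPreserving_iff.2 ⟨fun _ _ => hα.map_rel, fun p w hpw => ?_⟩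
  obtain ⟨q, hpq, hqw⟩ := hα.fibration_flip hpw
  exact ⟨q, hpq, Subtype.ext hqw⟩

theorem noInfiniteWalk_iff_wellFounded_flip : NoInfiniteWalk E ↔ WellFounded (flip E) := by
  rw [wellFounded_iff_isEmpty_descending_chain, isEmpty_subtype, NoInfiniteWalk, not_exists]
  rfl

theorem NoInfiniteWalk.of_fibration (hE : NoInfiniteWalk E)
    (hα : Relation.Fibration (flip E) (flip F) α) (hsurj : Function.Surjective α) :
    NoInfiniteWalk F := by
  rw [noInfiniteWalk_iff_wellFounded_flip] at hE ⊢
  exact ⟨hsurj.forall.2 fun p => (hE.apply p).of_fibration α hα⟩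

theorem NoInfiniteWalk.not_transGen_self (hE : NoInfiniteWalk E) (p : V) :
    ¬ Relation.TransGen E p p := fun hp =>
  (noInfiniteWalk_iff_wellFounded_flip.1 hE).transGen.irrefl.irrefl p
    (Relation.transGen_swap.2 hp)

theorem IsSource.eq_of_reflTransGen {s t : V} (ht : IsSource E t)
    (hst : Relation.ReflTransGen E s t) : t = s :=
  hst.cases_tail.resolve_right fun ⟨q, _, hqt⟩ => ht q hqt

theorem NoInfiniteWalk.isGamegraph (hE : NoInfiniteWalk E) {s : V}
    (hs : ∀ p, Relation.ReflTransGen E s p) : IsGamegraph E s :=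
  ⟨hE, fun q hqs => hE.not_transGen_self s (.tail' (hs q) hqs),
    fun t ht => ht.eq_of_reflTransGen (hs t), hs⟩

theorem IsGamegraph.of_surjective {s : V} (hG : IsGamegraph E s) (hα : OptionPreserving E F α)
    (hsurj : Function.Surjective α) : IsGamegraph F (α s) := by
  obtain ⟨hwalk, -, -, hreach⟩ := hG
  refine (hwalk.of_fibration hα.fibration_flip hsurj).isGamegraph (hsurj.forall.2 fun p => ?_)
  exact (hreach p).lift α fun _ _ => hα.map_rel

end

/-- The image of a rulegraph under an option preserving map induces a rulegraph;
moreover the image of a gamegraph is a gamegraph with starting position the image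
of the starting position. -/
theorem stmt_4 {V W : Type*} (E : V → V → Prop) (F : W → W → Prop) (α : V → W)
    (hR : NoInfiniteWalk E) (hα : OptionPreserving E F α) :
    NoInfiniteWalk (fun a b : ↥(Set.range α) => F a.1 b.1) ∧
      ∀ s : V, IsGamegraph E s →
        IsGamegraph (fun a b : ↥(Set.range α) => F a.1 b.1)
          ⟨α s, Set.mem_range_self s⟩ := by
  have hrange := hα.codRestrict Set.mem_range_self
  have hsurj : Function.Surjective (Set.rangeFactorization α) := Set.rangeFactorization_surjective
  exact ⟨hR.of_fibration hrange.fibration_flip hsurj, fun _ hs => hs.of_surjective hrange hsurj⟩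
end

section
/- Let ∼ be a congruence relation on a rulegraph R. If q is a subposition of p and p ∼ q, then p = q. In particular, if R is a gamegraph with starting position s, then the congruence class of s is the singleton {s}. -/
/-!
A congruence is a simulation: an arrow out of `p` is matched by an arrow out of any vertex related
to `p`, ending at a related vertex. The same then holds for nontrivial walks. So if a nontrivial
walk leads from `p` to a related vertex `q`, it is matched by a nontrivial walk from `q` to a
vertex related to `q`, and iterating this yields an infinite walk.
-/

open Function Relation

theorem NoInfiniteWalk.wellFounded {V : Type*} {E : V → V → Prop} (hE : NoInfiniteWalk E) :
    WellFounded (swap E) :=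
  wellFounded_iff_isEmpty_descending_chain.2 ⟨fun f => hE ⟨f.1, f.2⟩⟩

/-- `r` is a simulation from the digraph `E` to the digraph `F`: whenever `r p p'`, every arrow
out of `p` is matched by an arrow out of `p'` with related targets. Congruence relations enter the
argument only through this property. -/
def IsSimulation {V W : Type*} (E : V → V → Prop) (F : W → W → Prop) (r : V → W → Prop) : Prop :=
  ∀ ⦃p p' q⦄, r p p' → E p q → ∃ q', F p' q' ∧ r q q'

theorem IsCongruence.isSimulation {V : Type*} {E r : V → V → Prop} (hr : IsCongruence E r) :
    IsSimulation E E r := by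
  intro p p' q hpp' hpq
  have hmem : cls r q ∈ cls r '' OptSet E p' := hr.2 p p' hpp' ▸ Set.mem_image_of_mem _ hpq
  obtain ⟨q', hp'q', hcls⟩ := hmem
  exact ⟨q', hp'q', hcls.subset (hr.1.refl q')⟩

namespace IsSimulation

protected theorem transGen {V W : Type*} {E : V → V → Prop} {F : W → W → Prop}
    {r : V → W → Prop} (hr : IsSimulation E F r) : IsSimulation (TransGen E) (TransGen F) r := by
  intro p p' q hpp' hpq
  induction hpq with
  | single hpq =>
    obtain ⟨q', hp'q', hqq'⟩ := hr hpp' hpq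
    exact ⟨q', .single hp'q', hqq'⟩
  | tail _ hmq ih =>
    obtain ⟨m', hp'm', hmm'⟩ := ih
    obtain ⟨q', hm'q', hqq'⟩ := hr hmm' hmq
    exact ⟨q', hp'm'.tail hm'q', hqq'⟩

variable {V : Type*} {E r : V → V → Prop} {p q : V}

theorem not_rel_of_arrow (hr : IsSimulation E E r) (hE : WellFounded (swap E)) (hpq : E p q) :
    ¬ r p q := by
  induction p using hE.induction generalizing q with
  | _ p ih =>
    intro hrpq
    obtain ⟨q', hqq', hrqq'⟩ := hr hrpq hpq
    exact ih q hpq hqq' hrqq'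

theorem not_rel_of_transGen (hr : IsSimulation E E r) (hE : WellFounded (swap E))
    (hpq : TransGen E p q) : ¬ r p q :=
  hr.transGen.not_rel_of_arrow (hE.transGen.mono fun _ _ => transGen_swap.2) hpq

theorem eq_of_reflTransGen (hr : IsSimulation E E r) (hE : WellFounded (swap E))
    (hpq : ReflTransGen E p q) (hrpq : r p q) : p = q := by
  rcases reflTransGen_iff_eq_or_transGen.1 hpq with hqp | hpq
  · exact hqp.symm
  · exact absurd hrpq (hr.not_rel_of_transGen hE hpq)

theorem cls_eq_singleton (hr : IsSimulation E E r) (hE : WellFounded (swap E)) (hp : r p p)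
    (hreach : ∀ q, ReflTransGen E p q) : cls r p = {p} :=
  Set.eq_singleton_iff_unique_mem.2
    ⟨hp, fun q hpq => (hr.eq_of_reflTransGen hE (hreach q) hpq).symm⟩

end IsSimulation

theorem stmt_10_general {V : Type*} {E r : V → V → Prop} (hE : NoInfiniteWalk E)
    (hr : IsSimulation E E r) :
    (∀ p q, ReflTransGen E p q → r p q → p = q) ∧
      ∀ s, r s s → (∀ p, ReflTransGen E s p) → cls r s = {s} :=
  ⟨fun _ _ => hr.eq_of_reflTransGen hE.wellFounded, fun _ => hr.cls_eq_singleton hE.wellFounded⟩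

/-- No vertical collapsing: a congruence relation never relates a position to a
proper subposition; in particular the class of the starting position of a
gamegraph is a singleton. -/
theorem stmt_10 {V : Type*} (E : V → V → Prop) (hR : NoInfiniteWalk E)
    (r : V → V → Prop) (hcong : IsCongruence E r) :
    (∀ p q : V, Relation.ReflTransGen E p q → r p q → p = q) ∧
      ∀ s : V, IsGamegraph E s → cls r s = {s} := by
  obtain ⟨no_collapse, cls_eq⟩ := stmt_10_general hR hcong.isSimulation
  exact ⟨no_collapse, fun s hs => cls_eq s (hcong.1.refl s) hs.2.2.2⟩
end

section
/- For every rulegraph R there exists a unique congruence relation ⋈ on the vertices of R such that the quotient rulegraph R/⋈ is simple. -/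
/-!
Congruences are the post-fixed points of a monotone operator on the complete lattice of equivalence
relations, so there is a greatest one by Knaster–Tarski. The quotient map preserves options, so
congruences of a quotient pull back to exactly the congruences containing the one divided out. Hence
a quotient is simple exactly when the congruence is maximal, that is, when it is the greatest one.
-/

theorem image_eq_image_of_ker_le {X Y Z : Type*} {f : X → Y} {g : X → Z}
    (hfg : Setoid.ker f ≤ Setoid.ker g) {A B : Set X} (hAB : f '' A = f '' B) :
    g '' A = g '' B := by
  have image_subset {A B : Set X} (h : f '' A ⊆ f '' B) : g '' A ⊆ g '' B := by
    rintro _ ⟨a, ha, rfl⟩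
    obtain ⟨b, hb, hba⟩ := h (Set.mem_image_of_mem f ha)
    exact ⟨b, hb, hfg hba⟩
  exact (image_subset hAB.subset).antisymm (image_subset hAB.superset)

theorem ker_cls {V : Type*} (s : Setoid V) : Setoid.ker (cls s.r) = s :=
  Setoid.ext fun _ q => ⟨fun h => h.symm.subset (s.refl q),
    fun h => Set.ext fun _ => ⟨s.trans (s.symm h), s.trans h⟩⟩

/-- The operator on equivalence relations sending `s` to the relation between vertices whose options
meet the same classes of `s`; it is the operator whose post-fixed points are the congruences. -/
def optionSetoid {V : Type*} (E : V → V → Prop) : Setoid V →o Setoid V where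
  toFun s := Setoid.ker fun p => cls s.r '' OptSet E p
  monotone' s t hst _ _ h := image_eq_image_of_ker_le (by simpa only [ker_cls] using hst) h

theorem isCongruence_iff_le_optionSetoid {V : Type*} {E : V → V → Prop} {s : Setoid V} :
    IsCongruence E s.r ↔ s ≤ optionSetoid E s :=
  ⟨fun hs => hs.2, fun hs => ⟨s.iseqv, fun _ _ hpq => hs hpq⟩⟩

theorem isGreatest_gfp_optionSetoid {V : Type*} (E : V → V → Prop) :
    IsGreatest {s : Setoid V | IsCongruence E s.r} (optionSetoid E).gfp := by
  simpa only [isCongruence_iff_le_optionSetoid] using (optionSetoid E).isGreatest_gfp_le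

namespace OptionPreserving

variable {V W : Type*} {E : V → V → Prop} {F : W → W → Prop} {α : V → W}

theorem comap_optionSetoid (hα : OptionPreserving E F α) (t : Setoid W) :
    (optionSetoid F t).comap α = optionSetoid E (t.comap α) := by
  have ker_comp : Setoid.ker (cls t.r ∘ α) = Setoid.ker (cls (t.comap α).r) := by
    rw [ker_cls]
    exact congrArg (Setoid.comap α) (ker_cls t)
  ext p q
  change cls t.r '' OptSet F (α p) = cls t.r '' OptSet F (α q) ↔ _
  rw [hα p, hα q, ← Set.image_comp, ← Set.image_comp]
  exact ⟨image_eq_image_of_ker_le ker_comp.le, image_eq_image_of_ker_le ker_comp.ge⟩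

theorem isCongruence_ker (hα : OptionPreserving E F α) : IsCongruence E (Setoid.ker α).r := by
  have ker_eq_comap_bot : Setoid.ker α = Setoid.comap α ⊥ := rfl
  rw [isCongruence_iff_le_optionSetoid, ker_eq_comap_bot, ← hα.comap_optionSetoid]
  exact fun _ _ h => (bot_le : ⊥ ≤ optionSetoid F ⊥) h

theorem isCongruence_comap_iff (hα : OptionPreserving E F α) (hsurj : Function.Surjective α)
    {t : Setoid W} : IsCongruence E (t.comap α).r ↔ IsCongruence F t.r := by
  rw [isCongruence_iff_le_optionSetoid, isCongruence_iff_le_optionSetoid,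
    ← hα.comap_optionSetoid]
  exact (hsurj.forall₂ (p := fun a b => t a b → optionSetoid F t a b)).symm

theorem isSimple_iff_maximal_ker (hα : OptionPreserving E F α)
    (hsurj : Function.Surjective α) :
    IsSimple F ↔ Maximal (fun s : Setoid V => IsCongruence E s.r) (Setoid.ker α) := by
  constructor
  · intro hF
    refine ⟨hα.isCongruence_ker, fun s hs hker p q hpq => ?_⟩
    have comap_map : (s.map α).comap α = s := Setoid.comap_map_of_ker_le α s hker
    rw [← comap_map, hα.isCongruence_comap_iff hsurj] at hs
    exact hF _ hs _ _ (Setoid.le_comap_map hpq)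
  · intro hmax r hr
    let t : Setoid W := ⟨r, hr.1⟩
    have ker_le_comap : Setoid.ker α ≤ t.comap α := fun _ _ h => (bot_le : ⊥ ≤ t) h
    have comap_le_ker : t.comap α ≤ Setoid.ker α :=
      hmax.2 ((hα.isCongruence_comap_iff hsurj).2 hr) ker_le_comap
    exact hsurj.forall₂.2 fun _ _ h => comap_le_ker h

end OptionPreserving

theorem IsCongruence.optionPreserving_mk {V : Type*} {E : V → V → Prop} {s : Setoid V}
    (hs : IsCongruence E s.r) : OptionPreserving E (QuotE E s) (Quotient.mk s) := by
  have image_mk_eq {p q : V} (h : s p q) :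
      Quotient.mk s '' OptSet E p = Quotient.mk s '' OptSet E q :=
    image_eq_image_of_ker_le ((ker_cls s).trans (Setoid.ker_mk_eq s).symm).le (hs.2 p q h)
  refine fun p => Set.Subset.antisymm ?_ ?_
  · rintro _ ⟨p', x, hp', rfl, hx⟩
    exact image_mk_eq (Quotient.exact hp') ▸ ⟨x, hx, rfl⟩
  · rintro _ ⟨x, hx, rfl⟩
    exact ⟨p, x, rfl, rfl, hx⟩

theorem isCongruence_and_isSimple_quotE_iff_maximal {V : Type*} {E : V → V → Prop}
    {s : Setoid V} :
    IsCongruence E s.r ∧ IsSimple (QuotE E s) ↔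
      Maximal (fun t : Setoid V => IsCongruence E t.r) s := by
  have isSimple_iff (hs : IsCongruence E s.r) :
      IsSimple (QuotE E s) ↔ Maximal (fun t : Setoid V => IsCongruence E t.r) s := by
    rw [hs.optionPreserving_mk.isSimple_iff_maximal_ker Quotient.mk_surjective]
    exact iff_of_eq (congrArg _ (Setoid.ker_mk_eq s))
  exact ⟨fun h => (isSimple_iff h.1).1 h.2, fun h => ⟨h.prop, (isSimple_iff h.prop).2 h⟩⟩

theorem stmt_17_general {V : Type*} (E : V → V → Prop) :
    ∃! s : Setoid V, IsCongruence E s.r ∧ IsSimple (QuotE E s) := by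
  have hgreatest := isGreatest_gfp_optionSetoid E
  have hmaximal (s : Setoid V) :
      IsCongruence E s.r ∧ IsSimple (QuotE E s) ↔ s = (optionSetoid E).gfp :=
    isCongruence_and_isSimple_quotE_iff_maximal.trans hgreatest.maximal_iff
  simp only [hmaximal, existsUnique_eq]

/-- Every rulegraph has a unique congruence relation whose quotient is simple. -/
theorem stmt_17 {V : Type*} (E : V → V → Prop) (hR : NoInfiniteWalk E) :
    ∃! s : Setoid V, IsCongruence E s.r ∧ IsSimple (QuotE E s) :=
  stmt_17_general E
end
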